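/- (One-shot converse bound for the strong converse exponent.) For any discrete memoryless channel W: X → Y on finite alphabets and any c ≥ 0: if α ∈ (0,1), then 𝖣_α(W,c) ≥ max_{α≤β≤1} [α(1−β)/(β(1−α))](I_β(W) − c); and if α ∈ [1,∞], then 𝖣_α(W,c) ≥ max{I_α(W) − c, 0}. -/

import Mathlib

open scoped ENNReal NNReal BigOperators Classical
open Filter

noncomputable section

namespace RST

/-- Base-2 logarithm `ℝ≥0∞ → EReal`, with `log 0 = ⊥` and `log ⊤ = ⊤`. -/
def elog2 (s : ℝ≥0∞) : EReal :=
  if s = 0 then ⊥ else if s = ⊤ then ⊤ else ((Real.logb 2 s.toReal : ℝ) : EReal)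

/-- Base-2 logarithm `EReal → EReal` (for nonnegative arguments). -/
def eLog2 (x : EReal) : EReal :=
  if x = ⊤ then ⊤ else if x ≤ 0 then ⊥ else ((Real.logb 2 x.toReal : ℝ) : EReal)

/-- Base-2 exponential `EReal → ℝ≥0∞`. -/
def epow2 (x : EReal) : ℝ≥0∞ :=
  if x = ⊤ then ⊤ else if x = ⊥ then 0 else ENNReal.ofReal ((2 : ℝ) ^ x.toReal)

variable {X Y : Type*}

/-- A probability distribution on a finite alphabet, as an `ℝ≥0∞`-valued function. -/
def IsDist [Fintype X] (P : X → ℝ≥0∞) : Prop := ∑ x, P x = 1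

/-- A discrete memoryless channel: every row is a probability distribution. -/
def IsChannel [Fintype X] [Fintype Y] (W : X → Y → ℝ≥0∞) : Prop := ∀ x, ∑ y, W x y = 1

/-- Order-`α` Rényi divergence (base 2), with the order `α ∈ [0,∞]` encoded as `ℝ≥0∞`.
The conventions `0/0 = 0` and `a/0 = ∞` (for `a > 0`, `α > 1`) are built into `ℝ≥0∞`
arithmetic.  The second argument is allowed to be an arbitrary nonnegative vector. -/
def renyiD [Fintype X] (α : ℝ≥0∞) (P Q : X → ℝ≥0∞) : EReal :=
  if α = 0 then - elog2 (∑ x ∈ Finset.univ.filter fun x => P x ≠ 0, Q x)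
  else if α = 1 then ∑ x, ((P x).toReal : EReal) * elog2 (P x / Q x)
  else if α = ⊤ then elog2 (⨆ x, P x / Q x)
  else (((α.toReal - 1)⁻¹ : ℝ) : EReal) *
    elog2 (∑ x, P x ^ α.toReal * Q x ^ (1 - α.toReal))

/-- The `X`-marginal of a joint distribution on `X × Y`. -/
def margX [Fintype X] [Fintype Y] (P : X × Y → ℝ≥0∞) : X → ℝ≥0∞ := fun x => ∑ y, P (x, y)

/-- Order-`α` Rényi mutual information `I_α(X:Y)_P = min_{Q_Y} D_α(P‖P_X × Q_Y)`. -/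
def renyiMI [Fintype X] [Fintype Y] (α : ℝ≥0∞) (P : X × Y → ℝ≥0∞) : EReal :=
  ⨅ Q : {Q : Y → ℝ≥0∞ // IsDist Q}, renyiD α P fun p => margX P p.1 * Q.1 p.2

/-- The joint input-output distribution `P_X · W`. -/
def joint [Fintype X] [Fintype Y] (PX : X → ℝ≥0∞) (W : X → Y → ℝ≥0∞) : X × Y → ℝ≥0∞ :=
  fun p => PX p.1 * W p.1 p.2

/-- Order-`α` Rényi capacity `I_α(W) = max_{P_X} I_α(X:Y)_{P_X · W}`. -/
def renyiCap [Fintype X] [Fintype Y] (α : ℝ≥0∞) (W : X → Y → ℝ≥0∞) : EReal :=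
  ⨆ P : {P : X → ℝ≥0∞ // IsDist P}, renyiMI α (joint P.1 W)

/-- `N` is a simulation of a channel `X → Y` with communication cost at most `c` bits:
shared randomness `K = Fin m` with distribution `PK`, a message set `{1,…,M}` with
`log₂ M ≤ c`, an encoder `E` and a decoder `D`. -/
def IsSimulation [Fintype X] [Fintype Y] (c : ℝ) (N : X → Y → ℝ≥0∞) : Prop :=
  ∃ (m M : ℕ) (PK : Fin m → ℝ≥0∞) (E : X → Fin m → Fin M → ℝ≥0∞)
    (D : Fin M → Fin m → Y → ℝ≥0∞),
    0 < M ∧ Real.logb 2 M ≤ c ∧ (∑ k, PK k = 1) ∧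
    (∀ x k, ∑ j, E x k j = 1) ∧ (∀ j k, ∑ y, D j k y = 1) ∧
    ∀ x y, N x y = ∑ k, ∑ j, PK k * E x k j * D j k y

/-- `D_α(W, N) := max_x D_α(W(·|x) ‖ N(·|x))`. -/
def chD [Fintype X] [Fintype Y] (α : ℝ≥0∞) (W N : X → Y → ℝ≥0∞) : EReal :=
  ⨆ x, renyiD α (W x) (N x)

/-- `𝖣_α(W, c) := min_{N ∈ A(W,c)} D_α(W, N)`. -/
def simD [Fintype X] [Fintype Y] (α : ℝ≥0∞) (W : X → Y → ℝ≥0∞) (c : ℝ) : EReal :=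
  ⨅ N : {N : X → Y → ℝ≥0∞ // IsSimulation c N}, chD α W N.1

/-- The `n`-fold memoryless extension `W^{×n}` of a channel `W`. -/
def prodCh [Fintype X] [Fintype Y] (n : ℕ) (W : X → Y → ℝ≥0∞) :
    (Fin n → X) → (Fin n → Y) → ℝ≥0∞ :=
  fun xs ys => ∏ i, W (xs i) (ys i)

/-- A sequence of communication costs with rate at most `r`. -/
def RateOK (r : ℝ) (c : ℕ → ℝ) : Prop :=
  (∀ n, 0 ≤ c n) ∧ Filter.limsup (fun n : ℕ => ((c n / n : ℝ) : EReal)) Filter.atTop ≤ (r : EReal)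

/-- Reliability function `E_rf^{(α)}(W, r)`. -/
def Erf [Fintype X] [Fintype Y] (α : ℝ≥0∞) (W : X → Y → ℝ≥0∞) (r : ℝ) : EReal :=
  ⨆ c : {c : ℕ → ℝ // RateOK r c},
    Filter.liminf
      (fun n : ℕ => (((-1 : ℝ) / n : ℝ) : EReal) * eLog2 (simD α (prodCh n W) (c.1 n)))
      Filter.atTop

/-- Strong converse exponent `E_sc^{(α)}(W, r)`. -/
def Esc [Fintype X] [Fintype Y] (α : ℝ≥0∞) (W : X → Y → ℝ≥0∞) (r : ℝ) : EReal :=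
  ⨅ c : {c : ℕ → ℝ // RateOK r c},
    Filter.limsup
      (fun n : ℕ => (((1 : ℝ) / n : ℝ) : EReal) * simD α (prodCh n W) (c.1 n))
      Filter.atTop

/-- The `α`-Rényi simulation rate `R_RST^{(α)}(W)`. -/
def Rrst [Fintype X] [Fintype Y] (α : ℝ≥0∞) (W : X → Y → ℝ≥0∞) : EReal :=
  ⨅ c : {c : ℕ → ℝ // (∀ n, 0 ≤ c n) ∧
      Filter.limsup (fun n : ℕ => simD α (prodCh n W) (c n)) Filter.atTop = 0},
    Filter.limsup (fun n : ℕ => ((c.1 n / n : ℝ) : EReal)) Filter.atTop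

/-- n-fold product of a joint distribution on `X × Y`, as a distribution on pairs of
sequences. -/
def prodJoint [Fintype X] [Fintype Y] (n : ℕ) (P : X × Y → ℝ≥0∞) :
    (Fin n → X) × (Fin n → Y) → ℝ≥0∞ :=
  fun p => ∏ i, P (p.1 i, p.2 i)

/-- n-fold product distribution. -/
def prodDist [Fintype X] (n : ℕ) (P : X → ℝ≥0∞) : (Fin n → X) → ℝ≥0∞ :=
  fun xs => ∏ i, P (xs i)

/-- The type (empirical count vector) of a sequence. -/
def seqType [Fintype Y] [DecidableEq Y] {n : ℕ} (ys : Fin n → Y) : Y → ℕ :=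
  fun y => (Finset.univ.filter fun i => ys i = y).card

/-- The cardinality of the type class of a sequence. -/
def typeClassCard [Fintype Y] [DecidableEq Y] {n : ℕ} (ys : Fin n → Y) : ℕ :=
  (Finset.univ.filter fun zs : Fin n → Y => seqType zs = seqType ys).card

/-- The number of types of sequences in `Y^n`. -/
def numTypes (Y : Type*) [Fintype Y] [DecidableEq Y] (n : ℕ) : ℕ :=
  (Finset.univ.image fun ys : Fin n → Y => seqType ys).card

/-- `Φ_{Y^n}`: the uniform mixture over type classes of `Y^n`. -/
def PhiY (Y : Type*) [Fintype Y] [DecidableEq Y] (n : ℕ) : (Fin n → Y) → ℝ≥0∞ :=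
  fun ys => ((numTypes Y n : ℝ≥0∞) * (typeClassCard ys : ℝ≥0∞))⁻¹

end RST

/-!
The decoder output does not depend on the channel input once the message and the shared randomness
are fixed, so guessing the message uniformly costs a factor `M ≤ 2 ^ c`: every simulation `N`
satisfies `N x ≤ 2 ^ c * Q` for one output distribution `Q`. As the divergence is antitone in its
second argument, `D_α(W x‖N x) ≥ D_α(W x‖Q) - c`. Averaging over inputs never exceeds the worst
input, that is, `D_α(P·W‖P × Q) ≤ max_x D_α(W x‖Q)`, hence `I_α(W) - c ≤ D_α(W, N)` for every order.
For `α < 1`, Hölder's inequality makes `(1 - β) / β * D_β` antitone in `β`, which turns the bound of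
order `β ≥ α` into one of order `α`.
-/

namespace RST

section Logarithm

lemma elog2_eq_inv_log_two_mul_log (s : ℝ≥0∞) :
    elog2 s = ((Real.log 2)⁻¹ : ℝ) * ENNReal.log s := by
  have h2 : 0 < (Real.log 2)⁻¹ := inv_pos.2 (Real.log_pos one_lt_two)
  unfold elog2 ENNReal.log
  split_ifs
  · exact (EReal.coe_mul_bot_of_pos h2).symm
  · exact (EReal.coe_mul_top_of_pos h2).symm
  · rw [← EReal.coe_mul, Real.logb, div_eq_inv_mul]

lemma elog2_top : elog2 ⊤ = ⊤ := by simp [elog2]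

lemma elog2_one : elog2 1 = 0 := by simp [elog2]

lemma elog2_of_ne_zero_of_ne_top {s : ℝ≥0∞} (h0 : s ≠ 0) (ht : s ≠ ⊤) :
    elog2 s = (Real.logb 2 s.toReal : ℝ) := by
  simp only [elog2, if_neg h0, if_neg ht]

lemma elog2_mono : Monotone elog2 := fun s t h => by
  have h2 : (0 : EReal) ≤ ((Real.log 2)⁻¹ : ℝ) :=
    EReal.coe_nonneg.2 (inv_nonneg.2 (Real.log_nonneg one_le_two))
  simp only [elog2_eq_inv_log_two_mul_log]
  exact mul_le_mul_of_nonneg_left (ENNReal.log_monotone h) h2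

lemma elog2_mul (s t : ℝ≥0∞) : elog2 (s * t) = elog2 s + elog2 t := by
  have h2 : (0 : EReal) ≤ ((Real.log 2)⁻¹ : ℝ) :=
    EReal.coe_nonneg.2 (inv_nonneg.2 (Real.log_nonneg one_le_two))
  simp only [elog2_eq_inv_log_two_mul_log, ENNReal.log_mul_add]
  exact EReal.left_distrib_of_nonneg_of_ne_top h2 (EReal.coe_ne_top _) _ _

lemma elog2_rpow (s : ℝ≥0∞) (t : ℝ) : elog2 (s ^ t) = t * elog2 s := by
  simp only [elog2_eq_inv_log_two_mul_log, ENNReal.log_rpow]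
  exact mul_left_comm _ _ _

lemma elog2_two_rpow (c : ℝ) : elog2 (2 ^ c) = c := by
  have h2 : elog2 2 = 1 := by simp [elog2]
  rw [elog2_rpow, h2, mul_one]

lemma elog2_two_rpow_mul (c : ℝ) (s : ℝ≥0∞) : elog2 (2 ^ c * s) = c + elog2 s := by
  rw [elog2_mul, elog2_two_rpow]

lemma coe_sum_ereal {ι : Type*} (s : Finset ι) (f : ι → ℝ) :
    ((∑ i ∈ s, f i : ℝ) : EReal) = ∑ i ∈ s, (f i : EReal) :=
  map_sum (⟨⟨((↑) : ℝ → EReal), rfl⟩, EReal.coe_add⟩ : ℝ →+ EReal) f s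

lemma coe_mul_sum_ereal {ι : Type*} (s : Finset ι) {p : ℝ} (hp : 0 ≤ p) (f : ι → EReal) :
    (p : EReal) * ∑ i ∈ s, f i = ∑ i ∈ s, (p : EReal) * f i :=
  map_sum (⟨⟨((p : EReal) * ·), mul_zero _⟩, EReal.left_distrib_of_nonneg_of_ne_top
    (EReal.coe_nonneg.2 hp) (EReal.coe_ne_top p)⟩ : EReal →+ EReal) f s

lemma sum_coe_mul_ereal {ι : Type*} (s : Finset ι) {p : ι → ℝ} (hp : ∀ i, 0 ≤ p i) (t : EReal) :
    ∑ i ∈ s, (p i : EReal) * t = ((∑ i ∈ s, p i : ℝ) : EReal) * t := by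
  induction s using Finset.induction_on with
  | empty => simp
  | insert i s hi ih =>
    rw [Finset.sum_insert hi, Finset.sum_insert hi, ih, EReal.coe_add,
      EReal.right_distrib_of_nonneg (EReal.coe_nonneg.2 (hp i))
        (EReal.coe_nonneg.2 (Finset.sum_nonneg fun i _ => hp i))]

lemma mul_rpow_of_left_ne_zero_of_ne_top {s : ℝ≥0∞} (h0 : s ≠ 0) (ht : s ≠ ⊤) (t : ℝ≥0∞) (z : ℝ) :
    (s * t) ^ z = s ^ z * t ^ z := by
  simp [ENNReal.mul_rpow_eq_ite, h0, ht]

lemma two_rpow_ne_zero (c : ℝ) : (2 : ℝ≥0∞) ^ c ≠ 0 := by simp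

lemma two_rpow_ne_top (c : ℝ) : (2 : ℝ≥0∞) ^ c ≠ ⊤ :=
  ENNReal.rpow_ne_top_of_ne_zero two_ne_zero ENNReal.ofNat_ne_top

end Logarithm

section Distributions

variable {X Y : Type*} [Fintype X]

lemma IsDist.ne_top {P : X → ℝ≥0∞} (hP : IsDist P) (x : X) : P x ≠ ⊤ :=
  ENNReal.sum_ne_top.1 (hP.trans_ne ENNReal.one_ne_top) x (Finset.mem_univ x)

lemma IsDist.nonempty {P : X → ℝ≥0∞} (hP : IsDist P) : Nonempty X := by
  by_contra h
  rw [not_nonempty_iff] at h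
  simp [IsDist] at hP

lemma IsDist.sum_toReal {P : X → ℝ≥0∞} (hP : IsDist P) : ∑ x, (P x).toReal = 1 := by
  rw [← ENNReal.toReal_sum fun x _ => hP.ne_top x, hP, ENNReal.toReal_one]

lemma IsDist.exists_sum_mul_le {P : X → ℝ≥0∞} (hP : IsDist P) (f : X → ℝ≥0∞) :
    ∃ x, ∑ i, P i * f i ≤ f x := by
  have := hP.nonempty
  obtain ⟨x, hx⟩ := Finite.exists_max f
  refine ⟨x, ?_⟩
  calc ∑ i, P i * f i ≤ ∑ i, P i * f x := by gcongr; exact hx _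
    _ = f x := by rw [← Finset.sum_mul, hP, one_mul]

lemma IsDist.exists_le_sum_mul {P : X → ℝ≥0∞} (hP : IsDist P) (f : X → ℝ≥0∞) :
    ∃ x, f x ≤ ∑ i, P i * f i := by
  have := hP.nonempty
  obtain ⟨x, hx⟩ := Finite.exists_min f
  refine ⟨x, ?_⟩
  calc f x = ∑ i, P i * f x := by rw [← Finset.sum_mul, hP, one_mul]
    _ ≤ ∑ i, P i * f i := by gcongr; exact hx _

lemma margX_joint [Fintype Y] {W : X → Y → ℝ≥0∞} (hW : IsChannel W) (P : X → ℝ≥0∞) :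
    margX (joint P W) = P := by
  funext x
  simp only [margX, joint, ← Finset.mul_sum, hW x, mul_one]

end Distributions

section PowerSum

variable {X Y : Type*} [Fintype X]

/-- The sum `∑ x, P(x)^a Q(x)^(1-a)` inside the logarithm of the order-`a` Rényi divergence. -/
def renyiSum (a : ℝ) (P Q : X → ℝ≥0∞) : ℝ≥0∞ := ∑ x, P x ^ a * Q x ^ (1 - a)

lemma renyiSum_one (P Q : X → ℝ≥0∞) : renyiSum 1 P Q = ∑ x, P x := by
  simp [renyiSum]

lemma renyiSum_mono_right {a : ℝ} (ha : a ≤ 1) (P : X → ℝ≥0∞) : Monotone (renyiSum a P) :=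
  fun _ _ h => Finset.sum_le_sum fun x _ =>
    mul_le_mul_right (ENNReal.rpow_le_rpow (h x) (sub_nonneg.2 ha)) _

lemma renyiSum_anti_right {a : ℝ} (ha : 1 ≤ a) (P : X → ℝ≥0∞) : Antitone (renyiSum a P) := by
  refine fun Q Q' h => Finset.sum_le_sum fun x _ => mul_le_mul_right ?_ _
  rw [← neg_sub a 1, ENNReal.rpow_neg, ENNReal.rpow_neg, ENNReal.inv_le_inv]
  exact ENNReal.rpow_le_rpow (h x) (sub_nonneg.2 ha)

lemma renyiSum_two_rpow_mul_right (a c : ℝ) (P Q : X → ℝ≥0∞) :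
    renyiSum a P (fun x => 2 ^ c * Q x) = 2 ^ (c * (1 - a)) * renyiSum a P Q := by
  simp only [renyiSum, Finset.mul_sum,
    mul_rpow_of_left_ne_zero_of_ne_top (two_rpow_ne_zero c) (two_rpow_ne_top c),
    ← ENNReal.rpow_mul, mul_left_comm]

lemma renyiSum_joint [Fintype Y] {a : ℝ} (ha : 0 < a) {P : X → ℝ≥0∞} (hP : ∀ x, P x ≠ ⊤)
    (W : X → Y → ℝ≥0∞) (Q : Y → ℝ≥0∞) :
    renyiSum a (joint P W) (fun p => P p.1 * Q p.2) = ∑ x, P x * renyiSum a (W x) Q := by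
  simp only [renyiSum, joint, Fintype.sum_prod_type, Finset.mul_sum]
  refine Finset.sum_congr rfl fun x _ => Finset.sum_congr rfl fun y _ => ?_
  rcases eq_or_ne (P x) 0 with h0 | h0
  · simp [h0, ha]
  have hsplit : P x ^ a * P x ^ (1 - a) = P x := by
    rw [← ENNReal.rpow_add _ _ h0 (hP x), add_sub_cancel, ENNReal.rpow_one]
  rw [mul_rpow_of_left_ne_zero_of_ne_top h0 (hP x), mul_rpow_of_left_ne_zero_of_ne_top h0 (hP x),
    mul_mul_mul_comm, hsplit]

lemma rpow_mul_rpow_one_sub {a : ℝ} (ha : 0 ≤ a) (p : ℝ≥0∞) {q : ℝ≥0∞} (h0 : q ≠ 0) (ht : q ≠ ⊤) :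
    p ^ a * q ^ (1 - a) = q * (p / q) ^ a := by
  rw [ENNReal.rpow_sub _ _ h0 ht, ENNReal.rpow_one, ENNReal.div_rpow_of_nonneg _ _ ha]
  simp only [div_eq_mul_inv, mul_left_comm]

lemma eq_zero_of_renyiSum_ne_top {a : ℝ} (ha : 1 < a) {P Q : X → ℝ≥0∞} (h : renyiSum a P Q ≠ ⊤)
    {x : X} (hx : Q x = 0) : P x = 0 := by
  by_contra hP
  refine ENNReal.sum_ne_top.1 h x (Finset.mem_univ x) ?_
  rw [hx, ENNReal.zero_rpow_of_neg (sub_neg.2 ha)]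
  exact ENNReal.mul_top (by simp [ENNReal.rpow_eq_zero_iff, hP, (zero_lt_one.trans ha).not_gt])

lemma renyiSum_le_renyiSum_rpow {a b : ℝ} (ha : 0 < a) (hab : a ≤ b) (P : X → ℝ≥0∞)
    {Q : X → ℝ≥0∞} (hQ : IsDist Q) : renyiSum a P Q ≤ renyiSum b P Q ^ (a / b) := by
  have hb : 0 < b := ha.trans_le hab
  rcases hab.eq_or_lt with rfl | hlt
  · rw [div_self ha.ne', ENNReal.rpow_one]
  rcases eq_or_ne (renyiSum b P Q) ⊤ with htop | htop
  · rw [htop, ENNReal.top_rpow_of_pos (div_pos ha hb)]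
    exact le_top
  have hleft : ∀ x, P x ^ a * Q x ^ (1 - a) ≤ Q x * (P x / Q x) ^ a := fun x => by
    rcases eq_or_ne (Q x) 0 with h0 | h0
    · rcases lt_or_ge a 1 with ha1 | ha1
      · simp [h0, ENNReal.zero_rpow_of_pos (sub_pos.2 ha1)]
      · simp [eq_zero_of_renyiSum_ne_top (ha1.trans_lt hlt) htop h0, ha]
    · exact (rpow_mul_rpow_one_sub ha.le _ h0 (hQ.ne_top x)).le
  have hright : ∀ x, Q x * ((P x / Q x) ^ a) ^ (b / a) ≤ P x ^ b * Q x ^ (1 - b) := fun x => by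
    rcases eq_or_ne (Q x) 0 with h0 | h0
    · simp [h0]
    · rw [← ENNReal.rpow_mul, mul_div_cancel₀ _ ha.ne',
        rpow_mul_rpow_one_sub hb.le _ h0 (hQ.ne_top x)]
  calc renyiSum a P Q ≤ ∑ x, Q x * (P x / Q x) ^ a := Finset.sum_le_sum fun x _ => hleft x
    _ ≤ (∑ x, Q x) ^ (1 - (b / a)⁻¹) * (∑ x, Q x * ((P x / Q x) ^ a) ^ (b / a)) ^ (b / a)⁻¹ :=
      ENNReal.inner_le_weight_mul_Lp_of_nonneg _ ((one_le_div ha).2 hab) _ _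
    _ = (∑ x, Q x * ((P x / Q x) ^ a) ^ (b / a)) ^ (a / b) := by
      rw [hQ, ENNReal.one_rpow, one_mul, inv_div]
    _ ≤ renyiSum b P Q ^ (a / b) :=
      ENNReal.rpow_le_rpow (Finset.sum_le_sum fun x _ => hright x) (div_pos ha hb).le

lemma renyiSum_le_one {a : ℝ} (h0 : 0 < a) (h1 : a ≤ 1) {P Q : X → ℝ≥0∞} (hP : IsDist P)
    (hQ : IsDist Q) : renyiSum a P Q ≤ 1 := by
  calc renyiSum a P Q ≤ renyiSum 1 P Q ^ (a / 1) := renyiSum_le_renyiSum_rpow h0 h1 P hQ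
    _ = 1 := by rw [renyiSum_one, hP, ENNReal.one_rpow]

lemma one_le_renyiSum {a : ℝ} (ha : 1 ≤ a) {P Q : X → ℝ≥0∞} (hP : IsDist P) (hQ : IsDist Q) :
    1 ≤ renyiSum a P Q := by
  have h := renyiSum_le_renyiSum_rpow one_pos ha P hQ
  rw [renyiSum_one, hP] at h
  rwa [← ENNReal.one_rpow (1 / a), ENNReal.rpow_le_rpow_iff (by positivity)] at h

end PowerSum

section Divergence

variable {X Y : Type*} [Fintype X]

lemma order_eq_zero_or_one_or_top_or_ofReal (α : ℝ≥0∞) :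
    α = 0 ∨ α = 1 ∨ α = ⊤ ∨ ∃ a : ℝ, 0 < a ∧ a ≠ 1 ∧ α = ENNReal.ofReal a := by
  by_cases h0 : α = 0
  · exact .inl h0
  by_cases h1 : α = 1
  · exact .inr (.inl h1)
  by_cases ht : α = ⊤
  · exact .inr (.inr (.inl ht))
  have hne : α.toReal ≠ 1 := by rwa [Ne, ENNReal.toReal_eq_one_iff]
  exact .inr (.inr (.inr
    ⟨α.toReal, ENNReal.toReal_pos h0 ht, hne, (ENNReal.ofReal_toReal ht).symm⟩))

lemma renyiD_zero (P Q : X → ℝ≥0∞) :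
    renyiD 0 P Q = -elog2 (∑ x ∈ Finset.univ.filter fun x => P x ≠ 0, Q x) :=
  if_pos rfl

lemma renyiD_one (P Q : X → ℝ≥0∞) :
    renyiD 1 P Q = ∑ x, ((P x).toReal : EReal) * elog2 (P x / Q x) := by
  simp [renyiD]

lemma renyiD_top (P Q : X → ℝ≥0∞) : renyiD ⊤ P Q = elog2 (⨆ x, P x / Q x) := by
  simp [renyiD]

lemma renyiD_ofReal {a : ℝ} (h0 : 0 < a) (h1 : a ≠ 1) (P Q : X → ℝ≥0∞) :
    renyiD (ENNReal.ofReal a) P Q = ((a - 1)⁻¹ : ℝ) * elog2 (renyiSum a P Q) := by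
  simp [renyiD, renyiSum, h0.not_ge, h1, ENNReal.toReal_ofReal h0.le]

lemma inv_sub_one_mul_elog2_mono {a : ℝ} (ha : 1 ≤ a) :
    Monotone fun s => ((a - 1)⁻¹ : ℝ) * elog2 s := fun _ _ h =>
  mul_le_mul_of_nonneg_left (elog2_mono h) (EReal.coe_nonneg.2 (inv_nonneg.2 (sub_nonneg.2 ha)))

lemma inv_sub_one_mul_elog2_anti {a : ℝ} (ha : a ≤ 1) :
    Antitone fun s => ((a - 1)⁻¹ : ℝ) * elog2 s := fun s t h => by
  have hinv : (((a - 1)⁻¹ : ℝ) : EReal) ≤ 0 := EReal.coe_nonpos.2 (inv_nonpos.2 (sub_nonpos.2 ha))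
  simpa only [mul_comm] using EReal.mul_le_mul_of_nonpos_right (elog2_mono h) hinv

lemma renyiD_anti_right (α : ℝ≥0∞) (P : X → ℝ≥0∞) : Antitone (renyiD α P) := by
  intro Q Q' h
  have hdiv : ∀ x, P x / Q' x ≤ P x / Q x := fun x => ENNReal.div_le_div_left (h x) _
  rcases order_eq_zero_or_one_or_top_or_ofReal α with rfl | rfl | rfl | ⟨a, h0, h1, rfl⟩
  · rw [renyiD_zero, renyiD_zero, EReal.neg_le_neg_iff]
    exact elog2_mono (Finset.sum_le_sum fun x _ => h x)
  · rw [renyiD_one, renyiD_one]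
    exact Finset.sum_le_sum fun x _ => mul_le_mul_of_nonneg_left (elog2_mono (hdiv x))
      (EReal.coe_nonneg.2 ENNReal.toReal_nonneg)
  · rw [renyiD_top, renyiD_top]
    exact elog2_mono (iSup_mono hdiv)
  · rw [renyiD_ofReal h0 h1, renyiD_ofReal h0 h1]
    rcases le_total a 1 with ha | ha
    · exact inv_sub_one_mul_elog2_anti ha (renyiSum_mono_right ha P h)
    · exact inv_sub_one_mul_elog2_mono ha (renyiSum_anti_right ha P h)

lemma div_two_rpow_mul (c : ℝ) (p q : ℝ≥0∞) : p / (2 ^ c * q) = 2 ^ (-c) * (p / q) := by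
  rw [ENNReal.rpow_neg, div_eq_mul_inv, div_eq_mul_inv,
    ENNReal.mul_inv (.inl (two_rpow_ne_zero c)) (.inl (two_rpow_ne_top c)), mul_left_comm]

lemma renyiD_two_rpow_mul_right (α : ℝ≥0∞) {P : X → ℝ≥0∞} (hP : IsDist P) (c : ℝ)
    (Q : X → ℝ≥0∞) : renyiD α P (fun x => 2 ^ c * Q x) = renyiD α P Q - c := by
  rw [sub_eq_add_neg, add_comm, ← EReal.coe_neg]
  rcases order_eq_zero_or_one_or_top_or_ofReal α with rfl | rfl | rfl | ⟨a, h0, h1, rfl⟩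
  · rw [renyiD_zero, renyiD_zero, ← Finset.mul_sum, elog2_two_rpow_mul,
      EReal.neg_add (.inl (EReal.coe_ne_bot c)) (.inl (EReal.coe_ne_top c))]
    rfl
  · have hterm : ∀ x, ((P x).toReal : EReal) * elog2 (P x / (2 ^ c * Q x)) =
        ((P x).toReal : EReal) * (-c : ℝ) + ((P x).toReal : EReal) * elog2 (P x / Q x) := by
      intro x
      rw [div_two_rpow_mul, elog2_two_rpow_mul, EReal.left_distrib_of_nonneg_of_ne_top
        (EReal.coe_nonneg.2 ENNReal.toReal_nonneg) (EReal.coe_ne_top _)]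
    simp only [renyiD_one, hterm, Finset.sum_add_distrib]
    rw [sum_coe_mul_ereal _ fun _ => ENNReal.toReal_nonneg, hP.sum_toReal, EReal.coe_one, one_mul]
  · simp only [renyiD_top, div_two_rpow_mul, ← ENNReal.mul_iSup, elog2_two_rpow_mul]
  · have hexp : c * (1 - a) * (a - 1)⁻¹ = -c := by
      rw [← neg_sub a 1, mul_neg, neg_mul, mul_inv_cancel_right₀ (sub_ne_zero.2 h1)]
    rw [renyiD_ofReal h0 h1, renyiD_ofReal h0 h1, ← elog2_rpow, renyiSum_two_rpow_mul_right,
      mul_rpow_of_left_ne_zero_of_ne_top (two_rpow_ne_zero _) (two_rpow_ne_top _),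
      ← ENNReal.rpow_mul, hexp, elog2_two_rpow_mul, elog2_rpow]

lemma sub_div_log_two_le_toReal_mul_elog2_div {p q : ℝ≥0∞} (hp : p ≠ ⊤) (hq : q ≠ ⊤) :
    (((p.toReal - q.toReal) / Real.log 2 : ℝ) : EReal) ≤ (p.toReal : EReal) * elog2 (p / q) := by
  have h2 : 0 < Real.log 2 := Real.log_pos one_lt_two
  rcases eq_or_ne p 0 with rfl | hp0
  · simpa using div_nonpos_of_nonpos_of_nonneg (neg_nonpos.2 q.toReal_nonneg) h2.le
  have hp' : 0 < p.toReal := ENNReal.toReal_pos hp0 hp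
  rcases eq_or_ne q 0 with rfl | hq0
  · rw [ENNReal.div_zero hp0, elog2_top, EReal.coe_mul_top_of_pos hp']
    exact le_top
  have hq' : 0 < q.toReal := ENNReal.toReal_pos hq0 hq
  rw [elog2_of_ne_zero_of_ne_top (ENNReal.div_ne_zero.2 ⟨hp0, hq⟩) (ENNReal.div_ne_top hp hq0),
    ENNReal.toReal_div, ← EReal.coe_mul, EReal.coe_le_coe_iff, Real.logb, ← mul_div_assoc]
  gcongr
  calc p.toReal - q.toReal = p.toReal * (1 - (p.toReal / q.toReal)⁻¹) := by field_simp
    _ ≤ p.toReal * Real.log (p.toReal / q.toReal) := by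
      gcongr
      exact Real.one_sub_inv_le_log_of_pos (div_pos hp' hq')

lemma renyiD_one_nonneg {P Q : X → ℝ≥0∞} (hP : IsDist P) (hQ : IsDist Q) : 0 ≤ renyiD 1 P Q := by
  calc (0 : EReal) = ∑ x, ((((P x).toReal - (Q x).toReal) / Real.log 2 : ℝ) : EReal) := by
        rw [← coe_sum_ereal, ← Finset.sum_div, Finset.sum_sub_distrib, hP.sum_toReal,
          hQ.sum_toReal, sub_self, zero_div, EReal.coe_zero]
    _ ≤ ∑ x, ((P x).toReal : EReal) * elog2 (P x / Q x) := Finset.sum_le_sum fun x _ =>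
        sub_div_log_two_le_toReal_mul_elog2_div (hP.ne_top x) (hQ.ne_top x)
    _ = renyiD 1 P Q := (renyiD_one P Q).symm

lemma one_le_iSup_div {P Q : X → ℝ≥0∞} (hP : IsDist P) (hQ : IsDist Q) : 1 ≤ ⨆ x, P x / Q x := by
  rcases eq_or_ne (⨆ x, P x / Q x) ⊤ with htop | htop
  · exact htop ▸ le_top
  have hle : ∀ x, P x ≤ (⨆ x, P x / Q x) * Q x := fun x =>
    (ENNReal.div_le_iff_le_mul (.inr htop) (.inl (hQ.ne_top x))).1 (le_iSup (fun x => P x / Q x) x)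
  calc (1 : ℝ≥0∞) = ∑ x, P x := hP.symm
    _ ≤ ∑ x, (⨆ x, P x / Q x) * Q x := Finset.sum_le_sum fun x _ => hle x
    _ = ⨆ x, P x / Q x := by rw [← Finset.mul_sum, hQ, mul_one]

lemma renyiD_nonneg (α : ℝ≥0∞) {P Q : X → ℝ≥0∞} (hP : IsDist P) (hQ : IsDist Q) :
    0 ≤ renyiD α P Q := by
  rcases order_eq_zero_or_one_or_top_or_ofReal α with rfl | rfl | rfl | ⟨a, h0, h1, rfl⟩
  · rw [renyiD_zero, EReal.le_neg, neg_zero, ← elog2_one, ← hQ]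
    exact elog2_mono (Finset.sum_le_univ_sum_of_nonneg fun _ => zero_le)
  · exact renyiD_one_nonneg hP hQ
  · rw [renyiD_top, ← elog2_one]
    exact elog2_mono (one_le_iSup_div hP hQ)
  · have hzero : ((a - 1)⁻¹ : ℝ) * elog2 1 = 0 := by rw [elog2_one, mul_zero]
    rw [renyiD_ofReal h0 h1, ← hzero]
    rcases le_total a 1 with ha | ha
    · exact inv_sub_one_mul_elog2_anti ha (renyiSum_le_one h0 ha hP hQ)
    · exact inv_sub_one_mul_elog2_mono ha (one_le_renyiSum ha hP hQ)

lemma mul_renyiD_le_renyiD {a b : ℝ} (ha : 0 < a) (hab : a ≤ b) (hb : b ≤ 1) (ha1 : a < 1)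
    {P Q : X → ℝ≥0∞} (hP : IsDist P) (hQ : IsDist Q) :
    ((a * (1 - b) / (b * (1 - a)) : ℝ) : EReal) * renyiD (ENNReal.ofReal b) P Q ≤
      renyiD (ENNReal.ofReal a) P Q := by
  have hb0 : 0 < b := ha.trans_le hab
  rcases hb.eq_or_lt with rfl | hb1
  · simpa using renyiD_nonneg _ hP hQ
  have hcoef : a * (1 - b) / (b * (1 - a)) * (b - 1)⁻¹ = (a - 1)⁻¹ * (a / b) := by
    have := sub_ne_zero.2 ha1.ne
    have := sub_ne_zero.2 ha1.ne'
    have := sub_ne_zero.2 hb1.ne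
    field_simp
    ring
  calc ((a * (1 - b) / (b * (1 - a)) : ℝ) : EReal) * renyiD (ENNReal.ofReal b) P Q
      = ((a - 1)⁻¹ : ℝ) * elog2 (renyiSum b P Q ^ (a / b)) := by
        rw [renyiD_ofReal hb0 hb1.ne, elog2_rpow, ← mul_assoc, ← mul_assoc, ← EReal.coe_mul,
          ← EReal.coe_mul, hcoef]
    _ ≤ ((a - 1)⁻¹ : ℝ) * elog2 (renyiSum a P Q) :=
        inv_sub_one_mul_elog2_anti ha1.le (renyiSum_le_renyiSum_rpow ha hab P hQ)
    _ = renyiD (ENNReal.ofReal a) P Q := (renyiD_ofReal ha ha1.ne P Q).symm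

end Divergence

section Capacity

variable {X Y : Type*} [Fintype X] [Fintype Y] {W : X → Y → ℝ≥0∞}

lemma exists_renyiD_zero_joint_le {P : X → ℝ≥0∞} (hP : IsDist P) (W : X → Y → ℝ≥0∞)
    (Q : Y → ℝ≥0∞) :
    ∃ x, renyiD 0 (joint P W) (fun p => P p.1 * Q p.2) ≤ renyiD 0 (W x) Q := by
  have hsum : ∑ p ∈ Finset.univ.filter (fun p => joint P W p ≠ 0), P p.1 * Q p.2 =
      ∑ x, P x * ∑ y ∈ Finset.univ.filter (fun y => W x y ≠ 0), Q y := by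
    simp only [Finset.sum_filter, Fintype.sum_prod_type, Finset.mul_sum]
    refine Finset.sum_congr rfl fun x _ => Finset.sum_congr rfl fun y _ => ?_
    by_cases hx : P x = 0 <;> simp [joint, hx]
  obtain ⟨x, hx⟩ :=
    hP.exists_le_sum_mul fun x => ∑ y ∈ Finset.univ.filter (fun y => W x y ≠ 0), Q y
  refine ⟨x, ?_⟩
  rw [renyiD_zero, renyiD_zero, EReal.neg_le_neg_iff, hsum]
  exact elog2_mono hx

lemma renyiD_one_joint {P : X → ℝ≥0∞} (hP : ∀ x, P x ≠ ⊤) (W : X → Y → ℝ≥0∞) (Q : Y → ℝ≥0∞) :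
    renyiD 1 (joint P W) (fun p => P p.1 * Q p.2) =
      ∑ x, ((P x).toReal : EReal) * renyiD 1 (W x) Q := by
  simp only [renyiD_one, joint, Fintype.sum_prod_type]
  refine Finset.sum_congr rfl fun x _ => ?_
  rw [coe_mul_sum_ereal _ ENNReal.toReal_nonneg]
  refine Finset.sum_congr rfl fun y _ => ?_
  rcases eq_or_ne (P x) 0 with hx | hx
  · simp [hx]
  · rw [ENNReal.mul_div_mul_left _ _ hx (hP x), ENNReal.toReal_mul, EReal.coe_mul, mul_assoc]

lemma exists_renyiD_one_joint_le {P : X → ℝ≥0∞} (hP : IsDist P) (W : X → Y → ℝ≥0∞)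
    (Q : Y → ℝ≥0∞) :
    ∃ x, renyiD 1 (joint P W) (fun p => P p.1 * Q p.2) ≤ renyiD 1 (W x) Q := by
  have := hP.nonempty
  obtain ⟨x, hx⟩ := Finite.exists_max fun x => renyiD 1 (W x) Q
  refine ⟨x, ?_⟩
  calc renyiD 1 (joint P W) (fun p => P p.1 * Q p.2)
      = ∑ i, ((P i).toReal : EReal) * renyiD 1 (W i) Q := renyiD_one_joint hP.ne_top W Q
    _ ≤ ∑ i, ((P i).toReal : EReal) * renyiD 1 (W x) Q := Finset.sum_le_sum fun i _ =>
        mul_le_mul_of_nonneg_left (hx i) (EReal.coe_nonneg.2 ENNReal.toReal_nonneg)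
    _ = renyiD 1 (W x) Q := by
        rw [sum_coe_mul_ereal _ fun _ => ENNReal.toReal_nonneg, hP.sum_toReal, EReal.coe_one,
          one_mul]

lemma exists_renyiD_top_joint_le {P : X → ℝ≥0∞} (hP : IsDist P) (W : X → Y → ℝ≥0∞)
    (Q : Y → ℝ≥0∞) :
    ∃ x, renyiD ⊤ (joint P W) (fun p => P p.1 * Q p.2) ≤ renyiD ⊤ (W x) Q := by
  have := hP.nonempty
  obtain ⟨x, hx⟩ := Finite.exists_max fun x => ⨆ y, W x y / Q y
  refine ⟨x, ?_⟩
  rw [renyiD_top, renyiD_top]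
  refine elog2_mono (iSup_le fun ⟨i, y⟩ => ?_)
  rcases eq_or_ne (P i) 0 with hi | hi
  · simp [joint, hi]
  · calc P i * W i y / (P i * Q y) = W i y / Q y := ENNReal.mul_div_mul_left _ _ hi (hP.ne_top i)
      _ ≤ ⨆ y, W i y / Q y := le_iSup (fun y => W i y / Q y) y
      _ ≤ ⨆ y, W x y / Q y := hx i

lemma exists_renyiD_joint_le (α : ℝ≥0∞) {P : X → ℝ≥0∞} (hP : IsDist P) (W : X → Y → ℝ≥0∞)
    (Q : Y → ℝ≥0∞) :
    ∃ x, renyiD α (joint P W) (fun p => P p.1 * Q p.2) ≤ renyiD α (W x) Q := by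
  rcases order_eq_zero_or_one_or_top_or_ofReal α with rfl | rfl | rfl | ⟨a, h0, h1, rfl⟩
  · exact exists_renyiD_zero_joint_le hP W Q
  · exact exists_renyiD_one_joint_le hP W Q
  · exact exists_renyiD_top_joint_le hP W Q
  · simp only [renyiD_ofReal h0 h1, renyiSum_joint h0 hP.ne_top]
    rcases le_total a 1 with ha | ha
    · obtain ⟨x, hx⟩ := hP.exists_le_sum_mul fun x => renyiSum a (W x) Q
      exact ⟨x, inv_sub_one_mul_elog2_anti ha hx⟩
    · obtain ⟨x, hx⟩ := hP.exists_sum_mul_le fun x => renyiSum a (W x) Q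
      exact ⟨x, inv_sub_one_mul_elog2_mono ha hx⟩

lemma renyiCap_le_chD_const (α : ℝ≥0∞) (hW : IsChannel W) {Q : Y → ℝ≥0∞} (hQ : IsDist Q) :
    renyiCap α W ≤ chD α W fun _ => Q := by
  refine iSup_le fun ⟨P, hP⟩ => ?_
  obtain ⟨x, hx⟩ := exists_renyiD_joint_le α hP W Q
  calc renyiMI α (joint P W)
      ≤ renyiD α (joint P W) fun p => margX (joint P W) p.1 * Q p.2 :=
        iInf_le_of_le ⟨Q, hQ⟩ le_rfl
    _ = renyiD α (joint P W) fun p => P p.1 * Q p.2 := by rw [margX_joint hW]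
    _ ≤ renyiD α (W x) Q := hx
    _ ≤ chD α W fun _ => Q := le_iSup (fun x => renyiD α (W x) Q) x

lemma renyiCap_sub_le_chD_of_le (α : ℝ≥0∞) (hW : IsChannel W) {N : X → Y → ℝ≥0∞} {c : ℝ}
    {Q : Y → ℝ≥0∞} (hQ : IsDist Q) (hN : ∀ x y, N x y ≤ 2 ^ c * Q y) :
    renyiCap α W - c ≤ chD α W N := by
  refine EReal.sub_le_of_le_add ((renyiCap_le_chD_const α hW hQ).trans (iSup_le fun x => ?_))
  refine (EReal.sub_le_iff_le_add (.inl (EReal.coe_ne_bot c)) (.inl (EReal.coe_ne_top c))).1 ?_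
  calc renyiD α (W x) Q - c = renyiD α (W x) fun y => 2 ^ c * Q y :=
        (renyiD_two_rpow_mul_right α (hW x) c Q).symm
    _ ≤ renyiD α (W x) (N x) := renyiD_anti_right α (W x) (hN x)
    _ ≤ chD α W N := le_iSup (fun x => renyiD α (W x) (N x)) x

lemma chD_nonneg [Nonempty X] (α : ℝ≥0∞) (hW : IsChannel W) {N : X → Y → ℝ≥0∞}
    (hN : IsChannel N) : 0 ≤ chD α W N :=
  let ⟨x⟩ := ‹Nonempty X›
  le_iSup_of_le x (renyiD_nonneg α (hW x) (hN x))

lemma mul_chD_le_chD [Nonempty X] {a b : ℝ} (ha : 0 < a) (hab : a ≤ b) (hb : b ≤ 1) (ha1 : a < 1)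
    (hW : IsChannel W) {N : X → Y → ℝ≥0∞} (hN : IsChannel N) :
    ((a * (1 - b) / (b * (1 - a)) : ℝ) : EReal) * chD (ENNReal.ofReal b) W N ≤
      chD (ENNReal.ofReal a) W N := by
  obtain ⟨x, hx⟩ := exists_eq_ciSup_of_finite (f := fun x => renyiD (ENNReal.ofReal b) (W x) (N x))
  calc ((a * (1 - b) / (b * (1 - a)) : ℝ) : EReal) * chD (ENNReal.ofReal b) W N
      = ((a * (1 - b) / (b * (1 - a)) : ℝ) : EReal) * renyiD (ENNReal.ofReal b) (W x) (N x) := by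
        rw [chD, ← hx]
    _ ≤ renyiD (ENNReal.ofReal a) (W x) (N x) := mul_renyiD_le_renyiD ha hab hb ha1 (hW x) (hN x)
    _ ≤ chD (ENNReal.ofReal a) W N := le_iSup (fun x => renyiD (ENNReal.ofReal a) (W x) (N x)) x

end Capacity

section Simulation

variable {X Y : Type*} [Fintype X] [Fintype Y] {c : ℝ} {N W : X → Y → ℝ≥0∞}

lemma natCast_le_two_rpow {M : ℕ} (hM : 0 < M) (h : Real.logb 2 M ≤ c) : (M : ℝ≥0∞) ≤ 2 ^ c := by
  have hreal : (M : ℝ) ≤ 2 ^ c := (Real.logb_le_iff_le_rpow one_lt_two (Nat.cast_pos.2 hM)).1 h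
  calc (M : ℝ≥0∞) = ENNReal.ofReal M := (ENNReal.ofReal_natCast M).symm
    _ ≤ ENNReal.ofReal (2 ^ c) := ENNReal.ofReal_le_ofReal hreal
    _ = 2 ^ c := by rw [← ENNReal.ofReal_rpow_of_pos two_pos, ENNReal.ofReal_ofNat]

lemma IsSimulation.isChannel (h : IsSimulation c N) : IsChannel N := by
  obtain ⟨m, M, PK, E, D, -, -, hPK, hE, hD, hN⟩ := h
  intro x
  have hk : ∀ k, ∑ y, ∑ j, PK k * E x k j * D j k y = PK k := fun k => by
    rw [Finset.sum_comm]
    simp only [← Finset.mul_sum, hD, mul_one, hE]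
  simp only [hN]
  rw [Finset.sum_comm]
  simp only [hk, hPK]

lemma IsSimulation.exists_le_two_rpow_mul (h : IsSimulation c N) :
    ∃ Q : Y → ℝ≥0∞, IsDist Q ∧ ∀ x y, N x y ≤ 2 ^ c * Q y := by
  obtain ⟨m, M, PK, E, D, hM, hMc, hPK, hE, hD, hN⟩ := h
  have hM0 : (M : ℝ≥0∞) ≠ 0 := Nat.cast_ne_zero.2 hM.ne'
  have hMt : (M : ℝ≥0∞) ≠ ⊤ := ENNReal.natCast_ne_top M
  have hk : ∀ k, ∑ y, ∑ j, PK k * D j k y = PK k * M := fun k => by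
    rw [Finset.sum_comm]
    simp only [← Finset.mul_sum, hD, Finset.sum_const, Finset.card_univ, Fintype.card_fin,
      nsmul_one]
  have hE1 : ∀ x k j, E x k j ≤ 1 := fun x k j =>
    hE x k ▸ Finset.single_le_sum (f := E x k) (fun _ _ => zero_le) (Finset.mem_univ j)
  refine ⟨fun y => (M : ℝ≥0∞)⁻¹ * ∑ k, ∑ j, PK k * D j k y, ?_, fun x y => ?_⟩
  · rw [IsDist, ← Finset.mul_sum, Finset.sum_comm]
    simp only [hk, ← Finset.sum_mul, hPK, one_mul]
    exact ENNReal.inv_mul_cancel hM0 hMt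
  · calc N x y = ∑ k, ∑ j, PK k * E x k j * D j k y := hN x y
      _ ≤ ∑ k, ∑ j, PK k * 1 * D j k y := by gcongr; exact hE1 _ _ _
      _ = M * ((M : ℝ≥0∞)⁻¹ * ∑ k, ∑ j, PK k * D j k y) := by
        simp only [mul_one, ← mul_assoc, ENNReal.mul_inv_cancel hM0 hMt, one_mul]
      _ ≤ 2 ^ c * ((M : ℝ≥0∞)⁻¹ * ∑ k, ∑ j, PK k * D j k y) := by
        gcongr
        exact natCast_le_two_rpow hM hMc

lemma IsSimulation.renyiCap_sub_le_chD (hN : IsSimulation c N) (α : ℝ≥0∞) (hW : IsChannel W) :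
    renyiCap α W - c ≤ chD α W N :=
  let ⟨_, hQ, hle⟩ := hN.exists_le_two_rpow_mul
  renyiCap_sub_le_chD_of_le α hW hQ hle

end Simulation

/-- **One-shot converse bound for the strong converse exponent** (Theorem 16).
For any channel `W` and `c ≥ 0`:
`𝖣_α(W,c) ≥ max_{α ≤ β ≤ 1} (α(1-β))/(β(1-α)) (I_β(W) - c)` for `α ∈ (0,1)`, and
`𝖣_α(W,c) ≥ |I_α(W) - c|⁺` for `α ∈ [1,∞]`. -/
theorem one_shot_strong_converse_bound
    {X Y : Type*} [Fintype X] [Fintype Y] [Nonempty X] [Nonempty Y]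
    (W : X → Y → ℝ≥0∞) (hW : IsChannel W) (c : ℝ) (hc : 0 ≤ c) :
    (∀ α : ℝ, 0 < α → α < 1 →
      (⨆ β : {β : ℝ // α ≤ β ∧ β ≤ 1},
          (((α * (1 - β.1)) / (β.1 * (1 - α)) : ℝ) : EReal) *
            (renyiCap (ENNReal.ofReal β.1) W - (c : EReal))) ≤
        simD (ENNReal.ofReal α) W c) ∧
    (∀ α : ℝ≥0∞, 1 ≤ α →
      max (renyiCap α W - (c : EReal)) 0 ≤ simD α W c) := by
  refine ⟨fun α h0 h1 => iSup_le fun ⟨β, hαβ, hβ⟩ => le_iInf fun ⟨N, hN⟩ => ?_,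
    fun α _ => le_iInf fun ⟨N, hN⟩ =>
      max_le (hN.renyiCap_sub_le_chD α hW) (chD_nonneg α hW hN.isChannel)⟩
  have hcoef : 0 ≤ α * (1 - β) / (β * (1 - α)) :=
    div_nonneg (mul_nonneg h0.le (sub_nonneg.2 hβ))
      (mul_nonneg (h0.le.trans hαβ) (sub_nonneg.2 h1.le))
  calc ((α * (1 - β) / (β * (1 - α)) : ℝ) : EReal) * (renyiCap (ENNReal.ofReal β) W - c)
      ≤ ((α * (1 - β) / (β * (1 - α)) : ℝ) : EReal) * chD (ENNReal.ofReal β) W N :=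
        mul_le_mul_of_nonneg_left (hN.renyiCap_sub_le_chD _ hW) (EReal.coe_nonneg.2 hcoef)
    _ ≤ chD (ENNReal.ofReal α) W N := mul_chD_le_chD h0 hαβ hβ h1 hW hN.isChannel

end RST
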